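/- Let m ≥ 1 and σ > 0. Let Z be an ℝ^m-valued random vector that is σ-subgaussian, let Q : ℝ^m → ℤ^m be elementwise rounding to the nearest integer, let g : ℤ^m → {1, 2, 3, …} be a bijection such that ‖a‖_∞ > ‖b‖_∞ implies g(a) > g(b), and let q̄ = g(Q(Z)). Then: (i) for every m ≥ 1 there exists β > 2²/(∑_{i=1}^∞ i^{−2}) such that the probability mass function of q̄ satisfies P[q̄ = z] ≤ min(β z^{−2}, 1) for all positive integers z (power-law envelope class with parameters (2, β)); (ii) if m = 1, there exists β > e^{2α} with α = 1/(8σ²) such that P[q̄ = z] ≤ min(β e^{−α z}, 1) for all positive integers z, and if m = 2 the same holds with α = 1/(16σ²) (exponential envelope class with parameters (α, β)). -/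

import Mathlib

/-!
Let `z = g a` and `k = ‖a‖_∞`. Monotonicity of `g` puts the preimages of `1, …, z` into the cube
`{-k, …, k}^m`, so `z ≤ (2k + 1)^m`. On `{Q(Z) = a}` some signed coordinate of `Z` is at least
`k - 1/2`, so Chernoff's bound gives this event probability at most `exp (-(k² - k) / (2σ²))`.
Since `z^(2/m) ≤ (2k + 1)²`, the law of `g(Q(Z))` is `O(exp (-α z^(2/m)))` for every
`0 ≤ α < 1/(8σ²)`, and each of the envelopes dominates such a stretched exponential.
-/

open MeasureTheory
open scoped Matrix

/-- The Euclidean (ℓ²) norm of a vector in `ℝ^m`. -/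
noncomputable def eucNorm {m : ℕ} (v : Fin m → ℝ) : ℝ :=
  Real.sqrt (∑ i, v i ^ 2)

/-- The ℓ∞ norm `max_j |z j|` (as a natural number) of an integer vector in `ℤ^m`. -/
def zinf {m : ℕ} (z : Fin m → ℤ) : ℕ :=
  Finset.univ.sup fun j => (z j).natAbs

/-- Elementwise rounding to the nearest integer: `[Q x]ᵢ = k` exactly when
`x i ∈ [k - 1/2, k + 1/2)`. -/
noncomputable def roundv {m : ℕ} (x : Fin m → ℝ) : Fin m → ℤ :=
  fun i => ⌊x i + 1 / 2⌋

/-- A real random variable `X` is `σ`-subgaussian: it is centered and its moment generating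
function satisfies `E[exp (l X)] ≤ exp (l² σ² / 2)` for every `l ∈ ℝ`. -/
def RealSubgaussian {Ω : Type*} [MeasurableSpace Ω] (μ : Measure Ω) (σ : ℝ)
    (X : Ω → ℝ) : Prop :=
  Integrable X μ ∧ (∫ ω, X ω ∂μ) = 0 ∧
    ∀ l : ℝ, Integrable (fun ω => Real.exp (l * X ω)) μ ∧
      (∫ ω, Real.exp (l * X ω) ∂μ) ≤ Real.exp (l ^ 2 * σ ^ 2 / 2)

/-- An `ℝ^m`-valued random vector `X` is `σ`-subgaussian if `cᵀX` is `σ`-subgaussian for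
every unit vector `c`. -/
def VecSubgaussian {Ω : Type*} [MeasurableSpace Ω] (μ : Measure Ω) {m : ℕ} (σ : ℝ)
    (X : Ω → Fin m → ℝ) : Prop :=
  ∀ c : Fin m → ℝ, eucNorm c = 1 → RealSubgaussian μ σ (fun ω => c ⬝ᵥ X ω)

open Asymptotics Filter ProbabilityTheory
open scoped NNReal

lemma linear_sub_quadratic_le {a : ℝ} (ha : 0 < a) (b x : ℝ) :
    b * x - a * x ^ 2 ≤ b ^ 2 / (4 * a) := by
  rw [le_div_iff₀ (by positivity)]
  linarith [sq_nonneg (2 * a * x - b)]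

section Counting

lemma coe_equiv_pnat_le_card {α β : Type*} [LinearOrder β] (g : α ≃ ℕ+) {f : α → β}
    (hg : ∀ a b, f b < f a → g b < g a) {a : α} {s : Finset α} (hs : ∀ b, f b ≤ f a → b ∈ s) :
    (g a : ℕ) ≤ s.card := by
  have hmaps : Set.MapsTo g.symm (Finset.Icc 1 (g a)) s := fun z hz =>
    hs _ <| not_lt.1 fun hlt => by
      have hlt' : g a < z := by simpa only [Equiv.apply_symm_apply] using hg _ _ hlt
      exact hlt'.not_ge (Finset.mem_Icc.1 hz).2
  simpa only [PNat.card_Icc, PNat.one_coe, Nat.add_sub_cancel] using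
    Finset.card_le_card_of_injOn g.symm hmaps g.symm.injective.injOn

variable {m : ℕ}

lemma zinf_le_iff {a : Fin m → ℤ} {k : ℕ} :
    zinf a ≤ k ↔ a ∈ Finset.Icc (fun _ => -(k : ℤ)) (fun _ => (k : ℤ)) := by
  simp only [zinf, Finset.sup_le_iff, Finset.mem_univ, forall_const, Finset.mem_Icc, Pi.le_def,
    ← forall_and]
  exact forall_congr' fun i => by omega

lemma card_Icc_neg_const (k : ℕ) :
    (Finset.Icc (fun _ : Fin m => -(k : ℤ)) (fun _ => (k : ℤ))).card = (2 * k + 1) ^ m := by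
  have hside : ((k : ℤ) + 1 - -(k : ℤ)).toNat = 2 * k + 1 := by omega
  simp only [Pi.card_Icc, Int.card_Icc, hside, Finset.prod_const, Finset.card_univ,
    Fintype.card_fin]

lemma exists_natAbs_eq_zinf [NeZero m] (a : Fin m → ℤ) : ∃ i, (a i).natAbs = zinf a := by
  obtain ⟨i, -, hi⟩ := Finset.exists_mem_eq_sup Finset.univ Finset.univ_nonempty
    fun j => (a j).natAbs
  exact ⟨i, hi.symm⟩

lemma coe_le_pow_zinf (g : (Fin m → ℤ) ≃ ℕ+)
    (hg : ∀ a b : Fin m → ℤ, zinf b < zinf a → g b < g a) (a : Fin m → ℤ) :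
    (g a : ℕ) ≤ (2 * zinf a + 1) ^ m :=
  (coe_equiv_pnat_le_card g hg fun _ => zinf_le_iff.1).trans_eq (card_Icc_neg_const _)

lemma neZero_of_equiv_pnat (g : (Fin m → ℤ) ≃ ℕ+) : NeZero m := by
  refine ⟨?_⟩
  rintro rfl
  exact (Finite.of_equiv _ g).not_infinite inferInstance

lemma rpow_le_sq_zinf [NeZero m] (g : (Fin m → ℤ) ≃ ℕ+)
    (hg : ∀ a b : Fin m → ℤ, zinf b < zinf a → g b < g a) (a : Fin m → ℤ) :
    ((g a : ℕ) : ℝ) ^ (2 / m : ℝ) ≤ (2 * (zinf a : ℝ) + 1) ^ 2 := by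
  have hm : (m : ℝ) ≠ 0 := NeZero.ne _
  have hcount : ((g a : ℕ) : ℝ) ≤ (2 * (zinf a : ℝ) + 1) ^ m := by
    exact_mod_cast coe_le_pow_zinf g hg a
  calc ((g a : ℕ) : ℝ) ^ (2 / m : ℝ)
      ≤ ((2 * (zinf a : ℝ) + 1) ^ m) ^ (2 / m : ℝ) := by gcongr
    _ = (2 * (zinf a : ℝ) + 1) ^ 2 := by
      rw [← Real.rpow_natCast_mul (by positivity), mul_div_cancel₀ _ hm, Real.rpow_two]

end Counting

section Tail

variable {Ω : Type*} [MeasurableSpace Ω] {μ : Measure Ω}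

lemma RealSubgaussian.hasSubgaussianMGF {σ : ℝ} {X : Ω → ℝ} (hX : RealSubgaussian μ σ X) :
    HasSubgaussianMGF X (‖σ‖₊ ^ 2) μ where
  integrable_exp_mul l := (hX.2.2 l).1
  mgf_le l := by
    simpa only [mgf, NNReal.coe_pow, coe_nnnorm, Real.norm_eq_abs, sq_abs, mul_comm] using
      (hX.2.2 l).2

lemma eucNorm_single_one {m : ℕ} (i : Fin m) : eucNorm (Pi.single i 1) = 1 := by
  simp [eucNorm, Pi.single_apply]

lemma VecSubgaussian.hasSubgaussianMGF_apply {m : ℕ} {σ : ℝ} {Z : Ω → Fin m → ℝ}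
    (hZ : VecSubgaussian μ σ Z) (i : Fin m) :
    HasSubgaussianMGF (fun ω => Z ω i) (‖σ‖₊ ^ 2) μ := by
  simpa only [single_dotProduct, one_mul] using (hZ _ (eucNorm_single_one i)).hasSubgaussianMGF

variable [IsProbabilityMeasure μ] {c : ℝ≥0}

-- Dropping the `1/4` in `(|n| - 1/2)² = n² - |n| + 1/4` keeps the bound true at `n = 0`.
lemma measureReal_round_eq_le {X : Ω → ℝ} (hX : HasSubgaussianMGF X c μ) (n : ℤ) :
    μ.real {ω | round (X ω) = n} ≤
      Real.exp (-((n.natAbs : ℝ) ^ 2 - n.natAbs) / (2 * c)) := by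
  have hround (ω) (hω : round (X ω) = n) : |X ω - n| ≤ 1 / 2 := hω ▸ abs_sub_round (X ω)
  obtain rfl | hn := eq_or_ne n 0
  · simp
  have hn1 : (1 : ℝ) ≤ n.natAbs := by exact_mod_cast Int.natAbs_pos.2 hn
  obtain ⟨Y, hY, hYn⟩ : ∃ Y : Ω → ℝ, HasSubgaussianMGF Y c μ ∧
      ∀ ω, round (X ω) = n → (n.natAbs : ℝ) - 1 / 2 ≤ Y ω := by
    rw [Nat.cast_natAbs, Int.cast_abs]
    rcases le_total (0 : ℝ) n with h | h
    · refine ⟨X, hX, fun ω hω => ?_⟩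
      rw [abs_of_nonneg h]
      linarith [(abs_le.1 (hround ω hω)).1]
    · refine ⟨-X, hX.neg, fun ω hω => ?_⟩
      rw [abs_of_nonpos h, Pi.neg_apply]
      linarith [(abs_le.1 (hround ω hω)).2]
  calc μ.real {ω | round (X ω) = n}
      ≤ μ.real {ω | (n.natAbs : ℝ) - 1 / 2 ≤ Y ω} := measureReal_mono hYn
    _ ≤ Real.exp (-((n.natAbs : ℝ) - 1 / 2) ^ 2 / (2 * c)) := hY.measure_ge_le (by linarith)
    _ ≤ _ := by gcongr; linarith

lemma measureReal_roundv_eq_le {m : ℕ} [NeZero m] {Z : Ω → Fin m → ℝ}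
    (hZ : ∀ i, HasSubgaussianMGF (fun ω => Z ω i) c μ) (a : Fin m → ℤ) :
    μ.real {ω | roundv (Z ω) = a} ≤
      Real.exp (-((zinf a : ℝ) ^ 2 - zinf a) / (2 * c)) := by
  obtain ⟨i, hi⟩ := exists_natAbs_eq_zinf a
  rw [← hi]
  refine (measureReal_mono fun ω hω => ?_).trans (measureReal_round_eq_le (hZ i) (a i))
  exact (round_eq (Z ω i)).trans (congrFun hω i)

end Tail

section StretchedExponential

lemma isBigO_exp_neg_mul_sq_exp_neg_mul {α : ℝ} (hα : 0 < α) (γ : ℝ) {l : Filter ℝ} :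
    (fun x => Real.exp (-α * x ^ 2)) =O[l] fun x => Real.exp (-γ * x) :=
  Real.isBigO_exp_comp_exp_comp.2 <| isBoundedUnder_of ⟨γ ^ 2 / (4 * α), fun x => by
    simpa only [Pi.sub_apply, neg_mul, sub_neg_eq_add, neg_add_eq_sub] using
      linear_sub_quadratic_le hα γ x⟩

lemma isLittleO_exp_neg_mul_rpow_pow_inv {α p : ℝ} (hα : 0 < α) (hp : 0 < p) (r : ℕ) :
    (fun x : ℝ => Real.exp (-α * x ^ p)) =o[atTop] fun x => (x ^ r)⁻¹ := by
  refine ((isLittleO_exp_neg_mul_rpow_atTop hα (-r / p)).comp_tendsto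
    (tendsto_rpow_atTop hp)).congr' .rfl ?_
  filter_upwards [eventually_ge_atTop 0] with x hx
  rw [Function.comp_apply, ← Real.rpow_mul hx, mul_div_cancel₀ _ hp.ne', Real.rpow_neg hx,
    Real.rpow_natCast]

lemma tendsto_pnat_cast_cofinite_atTop : Tendsto (fun z : ℕ+ => (z : ℝ)) cofinite atTop :=
  tendsto_natCast_atTop_atTop.comp <|
    Nat.cofinite_eq_atTop ▸ PNat.coe_injective.tendsto_cofinite

variable {Ω : Type*} [MeasurableSpace Ω] {μ : Measure Ω} [IsProbabilityMeasure μ]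
  {m : ℕ} {c : ℝ≥0} {Z : Ω → Fin m → ℝ}

lemma isBigO_measureReal_exp_rpow [NeZero m]
    (hZ : ∀ i, HasSubgaussianMGF (fun ω => Z ω i) c μ)
    (g : (Fin m → ℤ) ≃ ℕ+) (hg : ∀ a b : Fin m → ℤ, zinf b < zinf a → g b < g a)
    {α : ℝ} (hα : 0 ≤ α) (hαc : α < 1 / (8 * c)) {l : Filter ℕ+} :
    (fun z => μ.real {ω | g (roundv (Z ω)) = z}) =O[l]
      fun z => Real.exp (-α * (z : ℝ) ^ (2 / m : ℝ)) := by
  set k : ℕ+ → ℝ := fun z => zinf (g.symm z)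
  have htail (z : ℕ+) : μ.real {ω | g (roundv (Z ω)) = z} ≤
      Real.exp (-(k z ^ 2 - k z) / (2 * c)) := by
    simpa only [← Equiv.eq_symm_apply] using measureReal_roundv_eq_le hZ (g.symm z)
  have hcount (z : ℕ+) : (z : ℝ) ^ (2 / m : ℝ) ≤ (2 * k z + 1) ^ 2 := by
    simpa only [Equiv.apply_symm_apply] using rpow_le_sq_zinf g hg (g.symm z)
  set s : ℝ := 1 / (2 * c) with hs
  have hsα : 0 < s - 4 * α := by
    have : s = 4 * (1 / (8 * c)) := by rw [hs]; ring
    linarith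
  have hexponent (z : ℕ+) : -(k z ^ 2 - k z) / (2 * c) - -α * (z : ℝ) ^ (2 / m : ℝ) ≤
      α + (s + 4 * α) ^ 2 / (4 * (s - 4 * α)) :=
    calc -(k z ^ 2 - k z) / (2 * c) - -α * (z : ℝ) ^ (2 / m : ℝ)
        = -(k z ^ 2 - k z) * s + α * (z : ℝ) ^ (2 / m : ℝ) := by rw [hs]; ring
      _ ≤ -(k z ^ 2 - k z) * s + α * (2 * k z + 1) ^ 2 := by gcongr; exact hcount z
      _ = α + ((s + 4 * α) * k z - (s - 4 * α) * k z ^ 2) := by ring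
      _ ≤ _ := by gcongr; exact linear_sub_quadratic_le hsα _ _
  refine (IsBigO.of_norm_le fun z => ?_).trans
    (Real.isBigO_exp_comp_exp_comp.2 (isBoundedUnder_of ⟨_, hexponent⟩))
  rw [Real.norm_of_nonneg measureReal_nonneg]
  exact htail z

end StretchedExponential

lemma exists_gt_forall_measure_le_min {Ω ι : Type*} [MeasurableSpace Ω] {μ : Measure Ω}
    [IsProbabilityMeasure μ] {S : ι → Set Ω} {f : ι → ℝ} (hf : ∀ z, 0 < f z)
    (h : (fun z => μ.real (S z)) =O[cofinite] f) (B : ℝ) :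
    ∃ β, B < β ∧ ∀ z, μ (S z) ≤ ENNReal.ofReal (min (β * f z) 1) := by
  obtain ⟨C, -, hC⟩ := bound_of_isBigO_cofinite h
  refine ⟨max C (B + 1), (lt_add_one B).trans_le (le_max_right _ _), fun z => ?_⟩
  rw [← ofReal_measureReal]
  refine ENNReal.ofReal_le_ofReal (le_min ?_ measureReal_le_one)
  calc μ.real (S z) ≤ C * f z := by
        simpa only [Real.norm_of_nonneg measureReal_nonneg, Real.norm_of_nonneg (hf z).le] using
          hC (hf z).ne'
    _ ≤ max C (B + 1) * f z := mul_le_mul_of_nonneg_right (le_max_left _ _) (hf z).le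

theorem stmt14_general {Ω : Type*} [MeasurableSpace Ω] {μ : Measure Ω} [IsProbabilityMeasure μ]
    {m : ℕ} {c : ℝ≥0} (hc : 0 < c) {Z : Ω → Fin m → ℝ}
    (hZ : ∀ i, HasSubgaussianMGF (fun ω => Z ω i) c μ)
    (g : (Fin m → ℤ) ≃ ℕ+) (hg : ∀ a b : Fin m → ℤ, zinf b < zinf a → g b < g a) :
    (∀ (r : ℕ) (B : ℝ), ∃ β, B < β ∧ ∀ z : ℕ+, μ {ω | g (roundv (Z ω)) = z} ≤
      ENNReal.ofReal (min (β / (z : ℝ) ^ r) 1)) ∧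
    (m = 1 → ∀ α B : ℝ, ∃ β, B < β ∧ ∀ z : ℕ+, μ {ω | g (roundv (Z ω)) = z} ≤
      ENNReal.ofReal (min (β * Real.exp (-α * (z : ℝ))) 1)) ∧
    (m = 2 → ∀ α : ℝ, 0 ≤ α → α < 1 / (8 * c) → ∀ B : ℝ, ∃ β, B < β ∧
      ∀ z : ℕ+, μ {ω | g (roundv (Z ω)) = z} ≤
        ENNReal.ofReal (min (β * Real.exp (-α * (z : ℝ))) 1)) := by
  have : NeZero m := neZero_of_equiv_pnat g
  have hdecay {α : ℝ} := isBigO_measureReal_exp_rpow hZ g hg (α := α) (l := cofinite)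
  obtain ⟨α₀, hα₀, hα₀c⟩ := exists_between (show 0 < 1 / (8 * (c : ℝ)) by positivity)
  refine ⟨fun r B => ?_, ?_, ?_⟩
  · have hpow : 0 < (2 / m : ℝ) := div_pos two_pos (Nat.cast_pos.2 (NeZero.pos m))
    have hpos (z : ℕ+) : 0 < ((z : ℝ) ^ r)⁻¹ := by positivity
    simpa only [div_eq_mul_inv] using exists_gt_forall_measure_le_min hpos
      ((hdecay hα₀.le hα₀c).trans
        ((isLittleO_exp_neg_mul_rpow_pow_inv hα₀ hpow r).isBigO.comp_tendsto
          tendsto_pnat_cast_cofinite_atTop)) B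
  · rintro rfl α B
    have hsq := hdecay hα₀.le hα₀c
    simp only [Nat.cast_one, div_one, Real.rpow_two] at hsq
    exact exists_gt_forall_measure_le_min (fun z => Real.exp_pos _)
      (hsq.trans ((isBigO_exp_neg_mul_sq_exp_neg_mul hα₀ α).comp_tendsto tendsto_map)) B
  · rintro rfl α hα hαc B
    have hexp := hdecay hα hαc
    simp only [Nat.cast_ofNat, div_self (two_ne_zero' ℝ), Real.rpow_one] at hexp
    exact exists_gt_forall_measure_le_min (fun z => Real.exp_pos _) hexp B

/-- Let `Z` be `σ`-subgaussian on `ℝ^m`, `Q` elementwise rounding, `g : ℤ^m → ℕ₊` a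
monotone bijection and `q̄ = g(Q(Z))`. Then (i) the PMF of `q̄` lies in a power-law
envelope class with parameters `(2, β)`; (ii) if `m = 1` it lies in an exponential envelope
class with `α = 1/(8σ²)`, and if `m = 2` with `α = 1/(16σ²)`. -/
theorem stmt14 {Ω : Type*} [MeasurableSpace Ω] (μ : Measure Ω) [IsProbabilityMeasure μ]
    {m : ℕ} (hm : 1 ≤ m) (σ : ℝ) (hσ : 0 < σ) (Z : Ω → Fin m → ℝ)
    (hZ : Measurable Z) (hsub : VecSubgaussian μ σ Z)
    (g : (Fin m → ℤ) ≃ ℕ+) (hg : ∀ a b : Fin m → ℤ, zinf b < zinf a → g b < g a) :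
    (∃ β : ℝ, (2 : ℝ) ^ 2 / (∑' i : ℕ+, 1 / (i : ℝ) ^ 2) < β ∧
      ∀ z : ℕ+, μ {ω | g (roundv (Z ω)) = z} ≤
        ENNReal.ofReal (min (β / (z : ℝ) ^ 2) 1)) ∧
    (m = 1 → ∃ β : ℝ, Real.exp (2 * (1 / (8 * σ ^ 2))) < β ∧
      ∀ z : ℕ+, μ {ω | g (roundv (Z ω)) = z} ≤
        ENNReal.ofReal (min (β * Real.exp (-(1 / (8 * σ ^ 2)) * (z : ℝ))) 1)) ∧
    (m = 2 → ∃ β : ℝ, Real.exp (2 * (1 / (16 * σ ^ 2))) < β ∧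
      ∀ z : ℕ+, μ {ω | g (roundv (Z ω)) = z} ≤
        ENNReal.ofReal (min (β * Real.exp (-(1 / (16 * σ ^ 2)) * (z : ℝ))) 1)) := by
  obtain ⟨hpow, hone, htwo⟩ := stmt14_general (pow_pos (nnnorm_pos.2 hσ.ne') 2)
    hsub.hasSubgaussianMGF_apply g hg
  have hlt : 1 / (16 * σ ^ 2) < 1 / (8 * (‖σ‖₊ ^ 2 : ℝ≥0)) := by
    rw [NNReal.coe_pow, coe_nnnorm, Real.norm_eq_abs, sq_abs]
    gcongr
    norm_num
  exact ⟨hpow 2 _, fun h => hone h _ _, fun h => htwo h _ (by positivity) hlt _⟩
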